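/- Let Q = ax²+bxy+cy² ∈ Q_F⁺(N, d_K), C = φ_{K,N}([Q]) ∈ C(N·O_K), and e = |(O_F/N·O_F)^×|. Then 𝔠 = a^e·(O_F·ω_Q + O_F) is an integral ideal of O_K in the ray class C, 𝔠·conj(𝔠) = a^{2e−1}·O_F·O_K, and 𝔠⁻¹ = a^{1−e}·(O_F·(−conj(ω_Q)) + O_F). -/

import Mathlib

open NumberField Complex

noncomputable section

def iota (F K : Type) [Field F] [Field K] [NumberField F] [Algebra F K]
    (u : 𝓞 F) : K := algebraMap F K (u : F)

def IsGammaN (F : Type) [Field F] [NumberField F] (τ : F →+* ℝ) (N : ℕ)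
    (γ : Matrix (Fin 2) (Fin 2) (𝓞 F)) : Prop :=
  IsUnit γ.det ∧ 0 < τ (γ.det : F) ∧
    (N : 𝓞 F) ∣ γ 1 0 ∧ ∃ ζ : (𝓞 F)ˣ, (N : 𝓞 F) ∣ (γ 1 1 - (ζ : 𝓞 F))

def FormAct (F : Type) [Field F] [NumberField F]
    (γ : Matrix (Fin 2) (Fin 2) (𝓞 F)) (a b c a' b' c' : 𝓞 F) : Prop :=
  γ.det * a' = a * γ 0 0 ^ 2 + b * γ 0 0 * γ 1 0 + c * γ 1 0 ^ 2 ∧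
  γ.det * b' = 2 * a * γ 0 0 * γ 0 1 + b * (γ 0 0 * γ 1 1 + γ 0 1 * γ 1 0)
      + 2 * c * γ 1 0 * γ 1 1 ∧
  γ.det * c' = a * γ 0 1 ^ 2 + b * γ 0 1 * γ 1 1 + c * γ 1 1 ^ 2

def IsFormN (F : Type) [Field F] [NumberField F] (τ : F →+* ℝ) (N : ℕ)
    (dK : 𝓞 F) (a b c : 𝓞 F) : Prop :=
  (∀ d : 𝓞 F, d ∣ a → d ∣ b → d ∣ c → IsUnit d) ∧
  0 < τ (a : F) ∧
  b ^ 2 - 4 * a * c = dK ∧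
  (∀ d : 𝓞 F, d ∣ a → d ∣ (N : 𝓞 F) → IsUnit d)

/-- `ω` is the root of `Q(x,1)` lying in the upper half-plane (via the fixed
embedding `σ : K → ℂ`). -/
def IsFormRoot (F K : Type) [Field F] [Field K] [NumberField F] [Algebra F K]
    (σ : K →+* ℂ) (a b c : 𝓞 F) (ω : K) : Prop :=
  iota F K a * ω ^ 2 + iota F K b * ω + iota F K c = 0 ∧ 0 < (σ ω).im

/-- Total positivity of an element of `O_F` (at all real embeddings of the
totally real field `F`). -/
def TotPos (F : Type) [Field F] [NumberField F] (x : 𝓞 F) : Prop :=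
  ∀ τ' : F →+* ℝ, 0 < τ' (x : F)

/-- Multiplicative congruence `ν ≡* 1 (mod N·O_K)`. -/
def MulCongOne (K : Type) [Field K] [NumberField K] (N : ℕ) (ν : K) : Prop :=
  ∃ α β : 𝓞 K, (β : K) ≠ 0 ∧
    IsCoprime (Ideal.span {β}) (Ideal.span {(N : 𝓞 K)}) ∧
    ν = (α : K) / (β : K) ∧ (N : 𝓞 K) ∣ (α - β)

/-!
Let `ω'` be the other root of `Q(x, 1)`. By Vieta's formulas, the product of the ideals `[ω, 1]` and
`[ω', 1]`, scaled by `a`, is generated by `a`, `aω`, `aω'` and `aωω' = c`, all of which are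
integral. It contains `b = -(aω + aω')` too, so it is the unit ideal since `Q` is primitive. Hence
`[ω, 1] * [ω', 1]` is generated by `a⁻¹`, which gives the norm and the inverse of `a ^ e * [ω, 1]`.
-/

open FractionalIdeal nonZeroDivisors Polynomial

section RootIdeal

variable {R S K : Type*} [CommRing R] [CommRing S] [Field K] [Algebra R K] [Algebra S K]
  {a b c : R} {t ω ω' : K}

/-- `ω` and `ω'` are the two roots of `a x² + b x + c`, for a form `a x² + b x y + c y²` over `R`
that is primitive in the sense that its coefficients generate the unit ideal. The roots are encoded
by Vieta's formulas, which are what computing with products of ideals needs. -/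
structure IsRootPair (a b c : R) (ω ω' : K) : Prop where
  span_eq_top : Ideal.span {a, b, c} = ⊤
  add_roots : algebraMap R K b = -(algebraMap R K a * (ω + ω'))
  mul_roots : algebraMap R K c = algebraMap R K a * (ω * ω')

namespace IsRootPair

theorem of_ne (hspan : Ideal.span {a, b, c} = ⊤)
    (hω : algebraMap R K a * ω ^ 2 + algebraMap R K b * ω + algebraMap R K c = 0)
    (hω' : algebraMap R K a * ω' ^ 2 + algebraMap R K b * ω' + algebraMap R K c = 0)
    (hne : ω' ≠ ω) : IsRootPair a b c ω ω' := by
  have hb : algebraMap R K b = -(algebraMap R K a * (ω + ω')) := by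
    apply mul_left_cancel₀ (sub_ne_zero.mpr hne)
    linear_combination hω' - hω
  exact ⟨hspan, hb, by linear_combination hω - ω * hb⟩

theorem symm (h : IsRootPair a b c ω ω') : IsRootPair a b c ω' ω :=
  ⟨h.span_eq_top, by rw [h.add_roots, add_comm], by rw [h.mul_roots, mul_comm ω]⟩

theorem map (h : IsRootPair a b c ω ω') (f : K →ₐ[R] K) : IsRootPair a b c (f ω) (f ω') :=
  ⟨h.span_eq_top, by simpa using congrArg f h.add_roots, by simpa using congrArg f h.mul_roots⟩

theorem one_mem (h : IsRootPair a b c ω ω') {M : Submodule R K} (ha : algebraMap R K a ∈ M)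
    (hb : algebraMap R K b ∈ M) (hc : algebraMap R K c ∈ M) : (1 : K) ∈ M := by
  have hle : Ideal.span {a, b, c} ≤ M.comap (Algebra.linearMap R K) := by
    rw [Ideal.span_le]
    rintro x (rfl | rfl | rfl) <;> assumption
  simpa using hle ((Ideal.eq_top_iff_one _).mp h.span_eq_top)

theorem algebraMap_ne_zero (h : IsRootPair a b c ω ω') : algebraMap R K a ≠ 0 := by
  intro ha
  have : (1 : K) ∈ (⊥ : Submodule R K) :=
    h.one_mem (by simp [ha]) (by simp [h.add_roots, ha]) (by simp [h.mul_roots, ha])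
  simp at this

theorem right_unique {ω'' : K} (h : IsRootPair a b c ω ω') (h' : IsRootPair a b c ω ω'') :
    ω' = ω'' := by
  simpa [h.algebraMap_ne_zero] using h.add_roots.symm.trans h'.add_roots

theorem isIntegral_mul_left (h : IsRootPair a b c ω ω') :
    IsIntegral R (algebraMap R K a * ω) := by
  have ha : a ≠ 0 := fun ha ↦ h.algebraMap_ne_zero (by rw [ha, map_zero])
  have hroot : aeval ω (C a * X ^ 2 + C b * X + C c) = 0 := by
    simp only [map_add, map_mul, map_pow, aeval_C, aeval_X, h.add_roots, h.mul_roots]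
    ring
  simpa [leadingCoeff_quadratic ha, Algebra.smul_def] using isIntegral_leadingCoeff_smul _ _ hroot

end IsRootPair

/-- The ideal `[ω, 1]`, encoded as the `S`-module `S ω + S`. It coincides with the lattice `R ω + R`
as soon as that lattice is stable under `S`. -/
def rootIdeal (S : Type*) [CommRing S] [Algebra S K] [IsFractionRing S K] (ω : K) :
    FractionalIdeal S⁰ K :=
  spanSingleton S⁰ ω + 1

variable [IsFractionRing S K]

theorem mem_rootIdeal_iff {x : K} :
    x ∈ rootIdeal S ω ↔ ∃ u v : S, x = algebraMap S K u * ω + algebraMap S K v := by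
  simp [rootIdeal, mem_add, mem_spanSingleton, mem_one_iff, Algebra.smul_def, eq_comm]

theorem spanSingleton_mul_rootIdeal (t ω : K) :
    spanSingleton S⁰ t * rootIdeal S ω = spanSingleton S⁰ (t * ω) + spanSingleton S⁰ t := by
  rw [rootIdeal, mul_add, mul_one, spanSingleton_mul_spanSingleton]

section Tower

variable [Algebra R S] [IsScalarTower R S K]

theorem eq_spanSingleton_mul_rootIdeal {J : FractionalIdeal S⁰ K}
    (hJ : ∀ x, x ∈ J ↔ ∃ u v : R, x = t * (algebraMap R K u * ω + algebraMap R K v)) :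
    J = spanSingleton S⁰ t * rootIdeal S ω := by
  rw [spanSingleton_mul_rootIdeal, ← sup_eq_add]
  apply le_antisymm
  · intro x hx
    obtain ⟨u, v, rfl⟩ := (hJ x).mp hx
    rw [sup_eq_add, mem_add]
    refine ⟨u • (t * ω), ?_, v • t, ?_, by simp only [Algebra.smul_def]; ring⟩
    · exact Submodule.smul_of_tower_mem _ u (mem_spanSingleton_self S⁰ _)
    · exact Submodule.smul_of_tower_mem _ v (mem_spanSingleton_self S⁰ _)
  · simp only [sup_le_iff, spanSingleton_le_iff_mem, hJ]
    exact ⟨⟨1, 0, by simp⟩, 0, 1, by simp⟩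

theorem mem_rootIdeal_iff_of_spanSingleton_mul (ht : t ≠ 0) {J : FractionalIdeal S⁰ K}
    (hJ : ∀ x, x ∈ J ↔ ∃ u v : R, x = t * (algebraMap R K u * ω + algebraMap R K v)) {x : K} :
    x ∈ rootIdeal S ω ↔ ∃ u v : R, x = algebraMap R K u * ω + algebraMap R K v := by
  have htx : t * x ∈ spanSingleton S⁰ t * rootIdeal S ω ↔ x ∈ rootIdeal S ω := by
    simp [mem_singleton_mul, ht]
  rw [← htx, ← eq_spanSingleton_mul_rootIdeal hJ, hJ]
  simp only [mul_right_inj' ht]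

theorem eq_spanSingleton_mul_rootIdeal_map (f : K →ₐ[R] K) {d : R} {J Jc : FractionalIdeal S⁰ K}
    (hJ : ∀ x, x ∈ J ↔
      ∃ u v : R, x = algebraMap R K d * (algebraMap R K u * ω + algebraMap R K v))
    (hJc : ∀ x, x ∈ Jc ↔ ∃ y ∈ J, x = f y) :
    Jc = spanSingleton S⁰ (algebraMap R K d) * rootIdeal S (f ω) := by
  refine eq_spanSingleton_mul_rootIdeal (R := R) fun x ↦ ?_
  simp only [hJc, hJ]
  constructor
  · rintro ⟨_, ⟨u, v, rfl⟩, rfl⟩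
    exact ⟨u, v, by simp⟩
  · rintro ⟨u, v, rfl⟩
    exact ⟨_, ⟨u, v, rfl⟩, by simp⟩

end Tower

section IsIntegralClosure

variable [IsIntegralClosure S R K] {e : ℕ}

theorem spanSingleton_le_one_iff_isIntegral {x : K} : spanSingleton S⁰ x ≤ 1 ↔ IsIntegral R x := by
  rw [spanSingleton_le_iff_mem, mem_one_iff, IsIntegralClosure.isIntegral_iff (A := S)]

theorem IsRootPair.spanSingleton_mul_rootIdeal_le_one (h : IsRootPair a b c ω ω') :
    spanSingleton S⁰ (algebraMap R K a) * rootIdeal S ω ≤ 1 := by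
  rw [spanSingleton_mul_rootIdeal, ← sup_eq_add]
  exact sup_le (spanSingleton_le_one_iff_isIntegral.mpr h.isIntegral_mul_left)
    (spanSingleton_le_one_iff_isIntegral.mpr (isIntegral_algebraMap (R := R)))

theorem IsRootPair.spanSingleton_pow_mul_rootIdeal_le_one (h : IsRootPair a b c ω ω') (he : e ≠ 0) :
    spanSingleton S⁰ (algebraMap R K a ^ e) * rootIdeal S ω ≤ 1 := by
  obtain ⟨m, rfl⟩ := Nat.exists_eq_succ_of_ne_zero he
  rw [pow_succ, ← spanSingleton_mul_spanSingleton, mul_assoc]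
  refine mul_le_one' ?_ h.spanSingleton_mul_rootIdeal_le_one
  exact spanSingleton_le_one_iff_isIntegral.mpr (isIntegral_algebraMap.pow m : IsIntegral R _)

theorem map_mem_rootIdeal (f : K →ₐ[R] K) {x : K} (hx : x ∈ rootIdeal S ω) :
    f x ∈ rootIdeal S (f ω) := by
  have hf (u : S) : ∃ v : S, algebraMap S K v = f (algebraMap S K u) := by
    rw [← IsIntegralClosure.isIntegral_iff (R := R)]
    exact (IsIntegralClosure.isIntegral_iff.mpr ⟨u, rfl⟩ : IsIntegral R _).map f
  obtain ⟨u, v, rfl⟩ := mem_rootIdeal_iff.mp hx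
  obtain ⟨u', hu'⟩ := hf u
  obtain ⟨v', hv'⟩ := hf v
  exact mem_rootIdeal_iff.mpr ⟨u', v', by rw [map_add, map_mul, hu', hv']⟩

variable [Algebra R S] [IsScalarTower R S K]

theorem mem_rootIdeal_map_iff (f : K →ₐ[R] K) (hf : f (f ω) = ω)
    (hω : ∀ x, x ∈ rootIdeal S ω ↔ ∃ u v : R, x = algebraMap R K u * ω + algebraMap R K v) {x : K} :
    x ∈ rootIdeal S (f ω) ↔ ∃ u v : R, x = algebraMap R K u * f ω + algebraMap R K v := by
  constructor
  · intro hx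
    obtain ⟨u, v, huv⟩ := (hω (f x)).mp (by simpa only [hf] using map_mem_rootIdeal f hx)
    refine ⟨u, v, f.injective ?_⟩
    simpa [hf] using huv
  · rintro ⟨u, v, rfl⟩
    refine mem_rootIdeal_iff.mpr ⟨algebraMap R S u, algebraMap R S v, ?_⟩
    simp only [← IsScalarTower.algebraMap_apply]

theorem mem_spanSingleton_mul_rootIdeal_map_iff_neg (f : K →ₐ[R] K) (hf : f (f ω) = ω)
    (hω : ∀ x, x ∈ rootIdeal S ω ↔ ∃ u v : R, x = algebraMap R K u * ω + algebraMap R K v)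
    {x : K} : x ∈ spanSingleton S⁰ t * rootIdeal S (f ω) ↔
      ∃ u v : R, x = t * (algebraMap R K u * -f ω + algebraMap R K v) := by
  simp only [mem_singleton_mul, mem_rootIdeal_map_iff f hf hω]
  constructor
  · rintro ⟨_, ⟨u, v, rfl⟩, rfl⟩
    exact ⟨-u, v, by simp⟩
  · rintro ⟨u, v, rfl⟩
    exact ⟨_, ⟨-u, v, rfl⟩, by simp⟩

theorem IsRootPair.spanSingleton_mul_rootIdeal_mul_rootIdeal (h : IsRootPair a b c ω ω') :
    spanSingleton S⁰ (algebraMap R K a) * (rootIdeal S ω * rootIdeal S ω') = 1 := by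
  set A := algebraMap R K a
  have hexpand : spanSingleton S⁰ A * (rootIdeal S ω * rootIdeal S ω') =
      spanSingleton S⁰ (algebraMap R K c) ⊔ spanSingleton S⁰ (A * ω) ⊔
        spanSingleton S⁰ (A * ω') ⊔ spanSingleton S⁰ A := by
    simp only [h.mul_roots, rootIdeal, ← spanSingleton_mul_spanSingleton, sup_eq_add]
    ring
  set I := spanSingleton S⁰ A * (rootIdeal S ω * rootIdeal S ω')
  have ⟨⟨⟨hcI, hωI⟩, hωI'⟩, haI⟩ :
      ((algebraMap R K c ∈ I ∧ A * ω ∈ I) ∧ A * ω' ∈ I) ∧ A ∈ I := by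
    simpa only [sup_le_iff, spanSingleton_le_iff_mem] using hexpand.ge
  apply le_antisymm
  · simp only [hexpand, sup_le_iff, spanSingleton_le_one_iff_isIntegral (R := R)]
    exact ⟨⟨⟨isIntegral_algebraMap, h.isIntegral_mul_left⟩, h.symm.isIntegral_mul_left⟩,
      isIntegral_algebraMap⟩
  · have hbI : algebraMap R K b ∈ (I : Submodule S K) := by
      rw [h.add_roots, mul_add]
      exact neg_mem (add_mem hωI hωI')
    rw [FractionalIdeal.one_le]
    exact h.one_mem (M := (I : Submodule S K).restrictScalars R) haI hbI hcI

theorem IsRootPair.spanSingleton_pow_mul_rootIdeal_mul (h : IsRootPair a b c ω ω') (he : e ≠ 0) :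
    spanSingleton S⁰ (algebraMap R K a ^ e) * rootIdeal S ω *
        (spanSingleton S⁰ (algebraMap R K a ^ e) * rootIdeal S ω') =
      spanSingleton S⁰ (algebraMap R K a ^ (2 * e - 1)) := by
  set A := algebraMap R K a
  have hpow : A ^ e * A ^ e = A ^ (2 * e - 1) * A := by
    rw [← pow_succ, ← pow_add]
    congr 1
    lia
  rw [mul_mul_mul_comm, spanSingleton_mul_spanSingleton, hpow, ← spanSingleton_mul_spanSingleton,
    mul_assoc, h.spanSingleton_mul_rootIdeal_mul_rootIdeal, mul_one]

theorem IsRootPair.inv_spanSingleton_mul_rootIdeal [IsDomain S] (h : IsRootPair a b c ω ω')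
    (ht : t ≠ 0) :
    (spanSingleton S⁰ t * rootIdeal S ω)⁻¹ =
      spanSingleton S⁰ (algebraMap R K a / t) * rootIdeal S ω' := by
  refine (right_inverse_eq K _ _ ?_).symm
  calc spanSingleton S⁰ t * rootIdeal S ω *
        (spanSingleton S⁰ (algebraMap R K a / t) * rootIdeal S ω')
    _ = spanSingleton S⁰ (t * (algebraMap R K a / t)) * (rootIdeal S ω * rootIdeal S ω') := by
      rw [mul_mul_mul_comm, spanSingleton_mul_spanSingleton]
    _ = 1 := by rw [mul_div_cancel₀ _ ht, h.spanSingleton_mul_rootIdeal_mul_rootIdeal]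

end IsIntegralClosure

end RootIdeal

section RayClass

/-- The multiplicative congruence `ν ≡* 1 (mod n)` for `ν` in the fraction field `K` of a domain
`S`, under which multiplication by `ν` preserves ray classes modulo `n`. It is `MulCongOne` when
`S = 𝓞 K` and `n` is a natural number. -/
def MulCongOneMod {S K : Type*} [CommRing S] [Field K] [Algebra S K] (n : S) (ν : K) : Prop :=
  ∃ α β : S, algebraMap S K β ≠ 0 ∧ IsCoprime (Ideal.span {β}) (Ideal.span {n}) ∧
    ν = algebraMap S K α / algebraMap S K β ∧ n ∣ α - β

theorem MulCongOneMod.of_dvd_sub_one {S K : Type*} [CommRing S] [Field K] [Algebra S K] {n α : S}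
    (h : n ∣ α - 1) : MulCongOneMod n (algebraMap S K α) :=
  ⟨α, 1, by simp, by simp [← Ideal.one_eq_top, isCoprime_one_left], by simp, h⟩

theorem dvd_pow_natCard_units_quotient_sub_one {R : Type*} [CommRing R] {a n : R}
    (h : IsCoprime a n) : n ∣ a ^ Nat.card (R ⧸ Ideal.span {n})ˣ - 1 := by
  have ha : IsUnit (Ideal.Quotient.mk (Ideal.span {n}) a) := by
    obtain ⟨p, q, hpq⟩ := h
    refine .of_mul_eq_one_right (Ideal.Quotient.mk _ p) ?_
    rw [← map_mul, ← map_one (Ideal.Quotient.mk _), Ideal.Quotient.eq, Ideal.mem_span_singleton]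
    exact ⟨-q, by linear_combination hpq⟩
  obtain ⟨u, hu⟩ := ha
  rw [← Ideal.mem_span_singleton, ← Ideal.Quotient.eq, map_pow, map_one, ← hu,
    ← Units.val_pow_eq_pow_val, pow_card_eq_one', Units.val_one]

end RayClass

section NumberField

theorem natCard_units_quotient_natCast_ne_zero (F : Type*) [Field F] [NumberField F] {N : ℕ}
    (hN : N ≠ 0) : Nat.card (𝓞 F ⧸ Ideal.span {(N : 𝓞 F)})ˣ ≠ 0 := by
  have := Ideal.finiteQuotientOfFreeOfNeBot (Ideal.span {(N : 𝓞 F)}) (by simpa using hN)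
  exact Nat.card_pos.ne'

theorem isPrincipalIdealRing_of_forall_ne_bot {R : Type*} [CommRing R]
    (h : ∀ I : Ideal R, I ≠ ⊥ → ∃ x, I = Ideal.span {x}) : IsPrincipalIdealRing R := by
  refine ⟨fun I ↦ ?_⟩
  obtain rfl | hI := eq_or_ne I ⊥
  · exact bot_isPrincipal
  · exact ⟨h I hI⟩

theorem span_eq_top_of_forall_dvd_isUnit {R : Type*} [CommRing R] [IsPrincipalIdealRing R]
    {s : Set R} (h : ∀ d, (∀ x ∈ s, d ∣ x) → IsUnit d) : Ideal.span s = ⊤ := by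
  obtain ⟨d, hd⟩ := IsPrincipalIdealRing.principal (Ideal.span s)
  rw [Ideal.submodule_span_eq] at hd
  rw [hd, Ideal.span_singleton_eq_top]
  refine h d fun x hx ↦ ?_
  rw [← Ideal.mem_span_singleton, ← hd]
  exact Ideal.subset_span hx

namespace IsFormN

variable {F : Type} [Field F] [NumberField F] [IsPrincipalIdealRing (𝓞 F)] {τ : F →+* ℝ} {N : ℕ}
  {d a b c : 𝓞 F}

theorem span_eq_top (h : IsFormN F τ N d a b c) : Ideal.span {a, b, c} = ⊤ :=
  span_eq_top_of_forall_dvd_isUnit fun d hd ↦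
    h.1 d (hd a (by simp)) (hd b (by simp)) (hd c (by simp))

theorem isCoprime (h : IsFormN F τ N d a b c) : IsCoprime a (N : 𝓞 F) :=
  IsRelPrime.isCoprime fun d ↦ h.2.2.2 d

theorem natCast_dvd_algebraMap_pow_sub_one (h : IsFormN F τ N d a b c) (K : Type*) [Field K]
    [Algebra F K] :
    (N : 𝓞 K) ∣ algebraMap (𝓞 F) (𝓞 K) (a ^ Nat.card (𝓞 F ⧸ Ideal.span {(N : 𝓞 F)})ˣ) - 1 := by
  simpa using map_dvd (algebraMap (𝓞 F) (𝓞 K))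
    (dvd_pow_natCard_units_quotient_sub_one h.isCoprime)

end IsFormN

theorem ne_of_map_eq_conj {K : Type*} [Field K] {σ : K →+* ℂ} {x y : K}
    (hy : σ y = starRingEnd ℂ (σ x)) (hx : (σ x).im ≠ 0) : y ≠ x := by
  rintro rfl
  exact hx (Complex.conj_eq_iff_im.mp hy.symm)

end NumberField

theorem stmt19_general {R S K : Type*} [CommRing R] [CommRing S] [IsDomain S] [Field K]
    [Algebra R S] [Algebra R K] [Algebra S K] [IsScalarTower R S K] [IsFractionRing S K]
    [IsIntegralClosure S R K] (conj : K →ₐ[R] K) {a b c : R}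
    (hspan : Ideal.span {a, b, c} = ⊤) {ω : K}
    (hω : algebraMap R K a * ω ^ 2 + algebraMap R K b * ω + algebraMap R K c = 0)
    (hconj : conj ω ≠ ω) {n : S} {e : ℕ} (he : e ≠ 0) (hae : n ∣ algebraMap R S (a ^ e) - 1)
    {J : FractionalIdeal S⁰ K}
    (hJ : ∀ x, x ∈ J ↔
      ∃ u v : R, x = algebraMap R K (a ^ e) * (algebraMap R K u * ω + algebraMap R K v)) :
    (∃ I : Ideal S, J = I) ∧
    MulCongOneMod n (algebraMap R K (a ^ e)) ∧
    (∀ Jc : FractionalIdeal S⁰ K, (∀ x, x ∈ Jc ↔ ∃ y ∈ J, x = conj y) →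
      J * Jc = spanSingleton S⁰ (algebraMap R K a ^ (2 * e - 1))) ∧
    ∀ x, x ∈ J⁻¹ ↔ ∃ u v : R, x = algebraMap R K a ^ ((1 : ℤ) - e) *
      (algebraMap R K u * -conj ω + algebraMap R K v) := by
  have hpair : IsRootPair a b c ω (conj ω) :=
    .of_ne hspan hω (by simpa using congrArg conj hω) hconj
  have hconj₂ : conj (conj ω) = ω := (hpair.map conj).right_unique hpair.symm
  have ha := hpair.algebraMap_ne_zero
  have hae₀ : algebraMap R K (a ^ e) ≠ 0 := map_pow (algebraMap R K) a e ▸ pow_ne_zero e ha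
  have hJ_eq := eq_spanSingleton_mul_rootIdeal hJ
  refine ⟨?_, ?_, fun Jc hJc ↦ ?_, fun x ↦ ?_⟩
  · have hJ_le : J ≤ 1 := by
      rw [hJ_eq, map_pow]
      exact hpair.spanSingleton_pow_mul_rootIdeal_le_one he
    exact (le_one_iff_exists_coeIdeal.mp hJ_le).imp fun _ ↦ Eq.symm
  · rw [IsScalarTower.algebraMap_apply R S K]
    exact .of_dvd_sub_one hae
  · rw [hJ_eq, eq_spanSingleton_mul_rootIdeal_map conj hJ hJc, map_pow,
      hpair.spanSingleton_pow_mul_rootIdeal_mul he]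
  · rw [hJ_eq, hpair.inv_spanSingleton_mul_rootIdeal hae₀, map_pow, ← zpow_one_sub_natCast₀ ha]
    exact mem_spanSingleton_mul_rootIdeal_map_iff_neg conj hconj₂ fun _ ↦
      mem_rootIdeal_iff_of_spanSingleton_mul hae₀ hJ

theorem stmt19 (F K : Type) [Field F] [Field K] [NumberField F] [NumberField K]
    [Algebra F K] (τ : F →+* ℝ) (σ : K →+* ℂ)
    (hcompat : ∀ x : F, σ (algebraMap F K x) = (τ x : ℂ))
    (hF_totallyReal : ∀ φ : F →+* ℂ, ∀ x : F, (φ x).im = 0)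
    (hquadratic : Module.finrank F K = 2)
    (hnarrow : ∀ I : Ideal (𝓞 F), I ≠ ⊥ →
      ∃ x : 𝓞 F, TotPos F x ∧ I = Ideal.span {x})
    (ωK : K) (hωKint : IsIntegral ℤ ωK) (hωKim : 0 < (σ ωK).im)
    (hgen : ∀ x : 𝓞 K, ∃ u v : 𝓞 F, (x : K) = iota F K u * ωK + iota F K v)
    (bK cK : 𝓞 F) (hmin : ωK ^ 2 + iota F K bK * ωK + iota F K cK = 0)
    (dK : 𝓞 F) (hdK : dK = bK ^ 2 - 4 * cK)
    -- conj : complex conjugation on K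
    (conj : K ≃ₐ[F] K)
    (hσconj : ∀ x : K, σ (conj x) = starRingEnd ℂ (σ x))
    (N : ℕ) (hN : 0 < N)
    -- Q ∈ Q_F⁺(N, d_K) with root ω_Q = ω
    (a b c : 𝓞 F) (hQ : IsFormN F τ N dK a b c) (haPos : TotPos F a)
    (ω : K) (hω : IsFormRoot F K σ a b c ω)
    -- e = |(O_F/N·O_F)^×|
    (e : ℕ) (he : e = Nat.card ((𝓞 F ⧸ Ideal.span {(N : 𝓞 F)})ˣ))
    -- J : the fractional ideal 𝔠 = a^e·(O_F·ω_Q + O_F)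
    (J : FractionalIdeal (nonZeroDivisors (𝓞 K)) K)
    (hJ : ∀ x : K, x ∈ (J : Submodule (𝓞 K) K) ↔
      ∃ u v : 𝓞 F, x = iota F K (a ^ e) * (iota F K u * ω + iota F K v)) :
    -- 𝔠 is an integral ideal of O_K lying in the ray class of [ω_Q, 1]_F
    (∃ I : Ideal (𝓞 K), J = (I : FractionalIdeal (nonZeroDivisors (𝓞 K)) K)) ∧
    MulCongOne K N (iota F K (a ^ e)) ∧
    -- 𝔠 · conj(𝔠) = a^{2e-1}·O_K
    (∀ Jc : FractionalIdeal (nonZeroDivisors (𝓞 K)) K,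
      (∀ x : K, x ∈ (Jc : Submodule (𝓞 K) K) ↔
        ∃ y : K, y ∈ (J : Submodule (𝓞 K) K) ∧ x = conj y) →
      J * Jc = FractionalIdeal.spanSingleton (nonZeroDivisors (𝓞 K))
        ((iota F K a) ^ (2 * e - 1))) ∧
    -- 𝔠⁻¹ = a^{1-e}·(O_F·(−conj ω_Q) + O_F)
    (∀ x : K, x ∈ ((J⁻¹ : FractionalIdeal (nonZeroDivisors (𝓞 K)) K) :
        Submodule (𝓞 K) K) ↔
      ∃ u v : 𝓞 F, x = (iota F K a) ^ ((1 : ℤ) - e) *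
        (iota F K u * (-(conj ω)) + iota F K v)) := by
  have := isPrincipalIdealRing_of_forall_ne_bot fun I hI ↦ (hnarrow I hI).imp fun _ ↦ And.right
  exact stmt19_general (conj.toAlgHom.restrictScalars (𝓞 F)) hQ.span_eq_top hω.1
    (ne_of_map_eq_conj (hσconj ω) hω.2.ne') (he ▸ natCard_units_quotient_natCast_ne_zero F hN.ne')
    (he ▸ hQ.natCast_dvd_algebraMap_pow_sub_one K) hJ
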